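/- Identify M_{nm}(ℂ) with M_n(ℂ) ⊗ M_m(ℂ), let A = M_n(ℂ) ⊗ 1 and let u be a unitary in M_{nm}(ℂ), with B = uAu*. Write u = Σ_{i,j=1}^{n} e_{ij} ⊗ u_{ij} with blocks u_{ij} ∈ M_m(ℂ), and let ρ[U(A,B)] be the n²×n² matrix with ((i,j),(k,l)) entry (1/(nm))·Tr(u_{kl}* u_{ij}). Then A and B are mutually orthogonal if and only if S(ρ[U(A,B)]) = 2 log n = log(dim A). -/

import Mathlib

open Matrix

/-- The normalized trace `τ = Tr/(nm)` on `M_{nm}(ℂ) = M_n(ℂ) ⊗ M_m(ℂ)`, realized as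
`n×n` matrices with `m×m` matrix entries: `τ(x) = (1/(nm)) Σ_i Tr(x_{ii})`. -/
noncomputable def tauNM (n m : ℕ)
    (x : Matrix (Fin n) (Fin n) (Matrix (Fin m) (Fin m) ℂ)) : ℂ :=
  ((n * m : ℕ) : ℂ)⁻¹ * ∑ i, (x i i).trace

/-- The embedding `a ↦ a ⊗ 1` of `M_n(ℂ)` into `M_{nm}(ℂ) = M_n(ℂ) ⊗ M_m(ℂ)`,
whose image is the subalgebra `A = M_n(ℂ) ⊗ 1`. -/
noncomputable def inclA (n m : ℕ) (a : Matrix (Fin n) (Fin n) ℂ) :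
    Matrix (Fin n) (Fin n) (Matrix (Fin m) (Fin m) ℂ) :=
  a.map (algebraMap ℂ (Matrix (Fin m) (Fin m) ℂ))

/-- The `n²×n²` density matrix `ρ[U(A,B)]` associated to the operational partition
induced by the unitary `u` with `B = uAu*`:
its `((i,j),(k,l))` entry is `(1/(nm))·Tr(u_{kl}* u_{ij})`. -/
noncomputable def rhoAB (n m : ℕ)
    (u : Matrix (Fin n) (Fin n) (Matrix (Fin m) (Fin m) ℂ)) :
    Matrix (Fin n × Fin n) (Fin n × Fin n) ℂ :=
  Matrix.of fun p q : Fin n × Fin n =>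
    ((n * m : ℕ) : ℂ)⁻¹ * (star (u q.1 q.2) * u p.1 p.2).trace

/-- The von Neumann entropy `S(ρ) = Σ_i η(λ_i)` of a Hermitian matrix `ρ`, where
`λ_i` are the eigenvalues of `ρ` (with multiplicity) and `η(t) = -t log t`. -/
noncomputable def vnEntropy {k : Type*} [Fintype k] [DecidableEq k]
    (ρ : Matrix k k ℂ) (hρ : ρ.IsHermitian) : ℝ :=
  ∑ i, Real.negMulLog (hρ.eigenvalues i)

/-! The trace of an element of `A` times an element of `B` is a linear functional of
`ρ = ρ[U(A,B)]`, namely `τ((a ⊗ 1) u (b ⊗ 1) u*) = Tr(ρ (a ⊗ bᵀ))`. On the other hand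
`τ(a ⊗ 1) τ(u (b ⊗ 1) u*) = n⁻² Tr(a) Tr(b) = Tr(n⁻² (a ⊗ bᵀ))`. Since the matrices `a ⊗ bᵀ` span,
orthogonality says that `ρ = n⁻² • 1`. As `ρ` is a density matrix of size `n²`, strict concavity of
`η` makes `n⁻² • 1` the only value of `ρ` at which the entropy equals `log n²`. -/

open scoped Kronecker

section Entropy

theorem sum_negMulLog_eq_log_card_iff {ι : Type*} [Fintype ι] {p : ι → ℝ}
    (hp : ∀ i, 0 ≤ p i) (hsum : ∑ i, p i = 1) :
    ∑ i, Real.negMulLog (p i) = Real.log (Fintype.card ι) ↔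
      ∀ i, p i = (Fintype.card ι : ℝ)⁻¹ := by
  have : Nonempty ι := by
    by_contra h
    simp [not_nonempty_iff.mp h] at hsum
  have hcard : (0 : ℝ) < Fintype.card ι := by exact_mod_cast Fintype.card_pos
  have jensen_eq_iff := Real.strictConcaveOn_negMulLog.map_sum_eq_iff (t := Finset.univ)
    (w := fun _ : ι => (Fintype.card ι : ℝ)⁻¹) (p := p) (fun _ _ => inv_pos.2 hcard)
    (by simp [hcard.ne']) (fun i _ => hp i)
  simp only [smul_eq_mul, ← Finset.mul_sum, hsum, mul_one, Finset.mem_univ, true_imp_iff]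
    at jensen_eq_iff
  rw [← jensen_eq_iff, Real.negMulLog, Real.log_inv, neg_mul_neg,
    mul_right_inj' (inv_pos.2 hcard).ne', eq_comm]

variable {k : Type*} [Fintype k] [DecidableEq k]

theorem forall_eigenvalues_eq_iff {𝕜 : Type*} [RCLike 𝕜] {ρ : Matrix k k 𝕜}
    (hρ : ρ.IsHermitian) (c : ℝ) :
    (∀ i, hρ.eigenvalues i = c) ↔ ρ = (c : 𝕜) • 1 := by
  rw [← EmbeddingLike.apply_eq_iff_eq (Unitary.conjStarAlgAut 𝕜 _ (star hρ.eigenvectorUnitary)),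
    hρ.conjStarAlgAut_star_eigenvectorUnitary, map_smul, map_one, smul_one_eq_diagonal,
    diagonal_eq_diagonal_iff]
  simp only [Function.comp_apply, RCLike.ofReal_inj]

open scoped ComplexOrder in
theorem vnEntropy_eq_log_card_iff {ρ : Matrix k k ℂ} (hρ : ρ.PosSemidef) (htr : ρ.trace = 1) :
    vnEntropy ρ hρ.isHermitian = Real.log (Fintype.card k) ↔
      ρ = (Fintype.card k : ℂ)⁻¹ • 1 := by
  have hsum : ∑ i, hρ.isHermitian.eigenvalues i = 1 := by
    rw [hρ.isHermitian.trace_eq_sum_eigenvalues] at htr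
    rw [← Complex.ofReal_inj, Complex.ofReal_sum, Complex.ofReal_one]
    exact htr
  rw [vnEntropy, sum_negMulLog_eq_log_card_iff hρ.eigenvalues_nonneg hsum,
    forall_eigenvalues_eq_iff hρ.isHermitian, RCLike.ofReal_inv, RCLike.ofReal_natCast]

end Entropy

theorem ext_iff_trace_mul_kronecker {R l m n p : Type*} [Semiring R] [Fintype l] [Fintype m]
    [Fintype n] [Fintype p] {A B : Matrix (l × m) (n × p) R} :
    A = B ↔ ∀ (x : Matrix n l R) (y : Matrix p m R),
      (A * (x ⊗ₖ y)).trace = (B * (x ⊗ₖ y)).trace := by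
  classical
  refine ⟨fun h x y => by rw [h], fun h => ?_⟩
  ext ⟨i, j⟩ ⟨r, s⟩
  simpa [single_kronecker_single, trace_mul_single] using h (single r i 1) (single s j 1)

section NormalizedTrace

variable {n m : ℕ}

theorem tauNM_mul_comm (x y : Matrix (Fin n) (Fin n) (Matrix (Fin m) (Fin m) ℂ)) :
    tauNM n m (x * y) = tauNM n m (y * x) := by
  simp only [tauNM, Matrix.mul_apply, trace_sum]
  rw [Finset.sum_comm]
  congr! 3 with j _ i _
  exact trace_mul_comm _ _

theorem tauNM_conj {u : Matrix (Fin n) (Fin n) (Matrix (Fin m) (Fin m) ℂ)}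
    (hu : star u * u = 1) (x : Matrix (Fin n) (Fin n) (Matrix (Fin m) (Fin m) ℂ)) :
    tauNM n m (u * x * star u) = tauNM n m x := by
  rw [tauNM_mul_comm, ← mul_assoc, hu, one_mul]

theorem inclA_one : inclA n m 1 = 1 :=
  Matrix.map_one _ (map_zero _) (map_one _)

theorem tauNM_inclA (hm : 0 < m) (a : Matrix (Fin n) (Fin n) ℂ) :
    tauNM n m (inclA n m a) = (n : ℂ)⁻¹ * a.trace := by
  have hm' : (m : ℂ) ≠ 0 := by exact_mod_cast hm.ne'
  have htr : ∑ i, (inclA n m a i i).trace = a.trace * m := by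
    simp only [inclA, map_apply, Algebra.algebraMap_eq_smul_one, trace_smul, trace_one,
      Fintype.card_fin, smul_eq_mul, ← Finset.sum_mul]
    rfl
  rw [tauNM, htr]
  push_cast
  field_simp

theorem inclA_mul_apply (a : Matrix (Fin n) (Fin n) ℂ)
    (x : Matrix (Fin n) (Fin n) (Matrix (Fin m) (Fin m) ℂ)) (i j : Fin n) :
    (inclA n m a * x) i j = ∑ k, a i k • x k j := by
  simp only [inclA, Matrix.mul_apply, map_apply, ← Algebra.smul_def]

end NormalizedTrace

section DensityMatrix

variable {n m : ℕ}

theorem tauNM_inclA_mul_conj (u : Matrix (Fin n) (Fin n) (Matrix (Fin m) (Fin m) ℂ))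
    (a b : Matrix (Fin n) (Fin n) ℂ) :
    tauNM n m (inclA n m a * (u * inclA n m b * star u)) = (rhoAB n m u * (a ⊗ₖ bᵀ)).trace := by
  have conj_apply (j i : Fin n) :
      (u * inclA n m b * star u) j i = ∑ k, ∑ l, b k l • (u j k * star (u i l)) := by
    rw [mul_assoc, Matrix.mul_apply]
    simp only [inclA_mul_apply, star_apply, Finset.mul_sum, mul_smul_comm]
  have trace_block (i : Fin n) :
      ((inclA n m a * (u * inclA n m b * star u)) i i).trace =
        ∑ j, ∑ k, ∑ l, (star (u i l) * u j k).trace * (a i j * b k l) := by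
    simp only [inclA_mul_apply, conj_apply, trace_sum, trace_smul, smul_eq_mul, Finset.mul_sum]
    congr! 3 with j _ k _ l _
    rw [trace_mul_comm]
    ring
  calc tauNM n m (inclA n m a * (u * inclA n m b * star u))
      = ∑ i, ∑ j, ∑ k, ∑ l, rhoAB n m u (j, k) (i, l) * (a i j * b k l) := by
        simp only [tauNM, trace_block, Finset.mul_sum]
        simp only [rhoAB, of_apply, mul_assoc]
    _ = ∑ j, ∑ k, ∑ i, ∑ l, rhoAB n m u (j, k) (i, l) * (a i j * b k l) := by
        rw [Finset.sum_comm]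
        exact Finset.sum_congr rfl fun j _ => Finset.sum_comm
    _ = (rhoAB n m u * (a ⊗ₖ bᵀ)).trace := by
        simp only [trace, diag_apply, Matrix.mul_apply, Fintype.sum_prod_type, kronecker_apply,
          transpose_apply]

open scoped ComplexOrder in
theorem posSemidef_rhoAB (u : Matrix (Fin n) (Fin n) (Matrix (Fin m) (Fin m) ℂ)) :
    (rhoAB n m u).PosSemidef := by
  let V : Matrix (Fin n × Fin n) (Fin m × Fin m) ℂ := of fun p => vec (u p.1 p.2)
  have gram : rhoAB n m u = ((n * m : ℕ) : ℂ)⁻¹ • (V * Vᴴ) := by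
    ext p q
    rw [rhoAB, of_apply, star_eq_conjTranspose, ← star_vec_dotProduct_vec, dotProduct_comm]
    rfl
  rw [gram]
  exact (posSemidef_self_mul_conjTranspose V).smul (inv_nonneg.2 (Nat.cast_nonneg _))

theorem trace_rhoAB (hn : 0 < n) (hm : 0 < m)
    {u : Matrix (Fin n) (Fin n) (Matrix (Fin m) (Fin m) ℂ)} (hu : star u * u = 1) :
    (rhoAB n m u).trace = 1 := by
  have hn' : (n : ℂ) ≠ 0 := by exact_mod_cast hn.ne'
  calc (rhoAB n m u).trace
      = tauNM n m (inclA n m 1 * (u * inclA n m 1 * star u)) := by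
        rw [tauNM_inclA_mul_conj, transpose_one, one_kronecker_one, mul_one]
    _ = tauNM n m (inclA n m 1) := by rw [inclA_one, one_mul, tauNM_conj hu]
    _ = 1 := by rw [tauNM_inclA hm, trace_one, Fintype.card_fin, inv_mul_cancel₀ hn']

theorem mutually_orthogonal_iff_rhoAB_eq (hm : 0 < m)
    {u : Matrix (Fin n) (Fin n) (Matrix (Fin m) (Fin m) ℂ)} (hu : star u * u = 1) :
    (∀ a b : Matrix (Fin n) (Fin n) ℂ,
        tauNM n m (inclA n m a * (u * inclA n m b * star u)) =
          tauNM n m (inclA n m a) * tauNM n m (u * inclA n m b * star u)) ↔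
      rhoAB n m u = ((n : ℂ) ^ 2)⁻¹ • 1 := by
  have tau_mul_tau (a b : Matrix (Fin n) (Fin n) ℂ) :
      tauNM n m (inclA n m a) * tauNM n m (u * inclA n m b * star u) =
        ((((n : ℂ) ^ 2)⁻¹ • 1 : Matrix (Fin n × Fin n) (Fin n × Fin n) ℂ) * (a ⊗ₖ bᵀ)).trace := by
    rw [tauNM_conj hu, tauNM_inclA hm, tauNM_inclA hm, smul_mul_assoc, one_mul, trace_smul,
      trace_kronecker, trace_transpose, smul_eq_mul]
    ring
  simp only [tauNM_inclA_mul_conj, tau_mul_tau]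
  rw [ext_iff_trace_mul_kronecker]
  exact ⟨fun h a y => by simpa only [transpose_transpose] using h a yᵀ, fun h a b => h a bᵀ⟩

end DensityMatrix

/-- Identify `M_{nm}(ℂ)` with `M_n(ℂ) ⊗ M_m(ℂ)`, let `A = M_n(ℂ) ⊗ 1`,
let `u` be a unitary with blocks `u_{ij} ∈ M_m(ℂ)`, and `B = uAu*`. Then `A` and `B`
are mutually orthogonal if and only if `S(ρ[U(A,B)]) = 2 log n = log(dim A)`. -/
theorem mutually_orthogonal_iff_entropy_eq_log_dim
    {n m : ℕ} (hn : 0 < n) (hm : 0 < m)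
    (u : Matrix (Fin n) (Fin n) (Matrix (Fin m) (Fin m) ℂ))
    (hu : star u * u = 1) (hu' : u * star u = 1)
    (hherm : (rhoAB n m u).IsHermitian) :
    (∀ a b : Matrix (Fin n) (Fin n) ℂ,
        tauNM n m (inclA n m a * (u * inclA n m b * star u)) =
          tauNM n m (inclA n m a) * tauNM n m (u * inclA n m b * star u)) ↔
      vnEntropy (rhoAB n m u) hherm = 2 * Real.log n := by
  have log_card : 2 * Real.log n = Real.log (Fintype.card (Fin n × Fin n)) := by
    simp [← sq]
  rw [mutually_orthogonal_iff_rhoAB_eq hm hu, log_card,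
    vnEntropy_eq_log_card_iff (posSemidef_rhoAB u) (trace_rhoAB hn hm hu)]
  simp [← sq]
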